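/- Let x > 0 be real, set q = e^{−π/x} and α = 1 − φ⁴(−q⁸)/φ⁴(q⁸). Then F_{(4,1)}(x) = −(π/(√2 · x)) · log( (1 − α^{1/8}) / (1 + α^{1/8}) ), where α ∈ (0,1) and α^{1/8} denotes the positive real eighth root. -/

import Mathlib

open Filter

/-- Ramanujan's theta function `φ(q) = ∑_{n ∈ ℤ} q^{n²}`. -/
noncomputable def phi (q : ℝ) : ℝ := ∑' n : ℤ, q ^ (n ^ 2)

lemma hasSum_two_maps {β γ : Type*} {f : γ → ℝ} {i j : β → γ} (hi : Function.Injective i)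
    (hj : Function.Injective j) (hc : IsCompl (Set.range i) (Set.range j)) {a b : ℝ}
    (ha : HasSum (fun x => f (i x)) a) (hb : HasSum (fun x => f (j x)) b) : HasSum f (a + b) :=
  (hi.hasSum_range_iff.mpr ha).add_isCompl hc (hj.hasSum_range_iff.mpr hb)

lemma tsum_two_maps {β γ : Type*} {f : γ → ℝ} {i j : β → γ} (hi : Function.Injective i)
    (hj : Function.Injective j) (hc : IsCompl (Set.range i) (Set.range j))
    (hf : Summable f) : ∑' x, f x = ∑' x, f (i x) + ∑' x, f (j x) :=
  (hasSum_two_maps hi hj hc (hf.comp_injective hi).hasSum (hf.comp_injective hj).hasSum).tsum_eq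

lemma tsum_even_odd {f : ℤ → ℝ} (hf : Summable f) :
    ∑' n, f n = ∑' n : ℤ, f (2 * n) + ∑' n : ℤ, f (2 * n + 1) := by
  apply tsum_two_maps (i := fun n : ℤ => 2 * n) (j := fun n : ℤ => 2 * n + 1) _ _ _ hf
  · intro a b h; simp at h; omega
  · intro a b h; simp at h; omega
  · rw [← compl_eq_iff_isCompl]
    ext n
    simp only [Set.mem_compl_iff, Set.mem_range, not_exists]
    constructor
    · intro h
      refine ⟨n / 2, ?_⟩
      have := h (n / 2)
      omega
    · rintro ⟨k, rfl⟩ m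
      omega

lemma tsum_rot {f : ℤ × ℤ → ℝ} (hf : Summable f) :
    ∑' n, f n = ∑' n : ℤ × ℤ, f (n.1 + n.2, n.1 - n.2)
      + ∑' n : ℤ × ℤ, f (n.1 + n.2, n.1 - n.2 - 1) := by
  apply tsum_two_maps (i := fun n : ℤ × ℤ => (n.1 + n.2, n.1 - n.2))
    (j := fun n : ℤ × ℤ => (n.1 + n.2, n.1 - n.2 - 1)) _ _ _ hf
  · rintro ⟨a, b⟩ ⟨c, d⟩ h; simp only [Prod.mk.injEq] at h ⊢; omega
  · rintro ⟨a, b⟩ ⟨c, d⟩ h; simp only [Prod.mk.injEq] at h ⊢; omega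
  · rw [← compl_eq_iff_isCompl]
    ext ⟨a, b⟩
    simp only [Set.mem_compl_iff, Set.mem_range, not_exists, Prod.mk.injEq, Prod.exists]
    constructor
    · intro h
      refine ⟨(a + b + 1) / 2, a - (a + b + 1) / 2, ?_⟩
      have := h ((a + b) / 2) (a - (a + b) / 2)
      omega
    · rintro ⟨c, d, h1, h2⟩ m k
      omega

lemma mul_rot {f g f1 g1 f2 g2 : ℤ → ℝ} (hf : Summable f) (hg : Summable g)
    (hf1 : Summable f1) (hg1 : Summable g1) (hf2 : Summable f2) (hg2 : Summable g2)
    (h1 : ∀ c d, f (c + d) * g (c - d) = f1 c * g1 d)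
    (h2 : ∀ c d, f (c + d) * g (c - d - 1) = f2 c * g2 d) :
    (∑' n, f n) * (∑' n, g n) = (∑' n, f1 n) * (∑' n, g1 n) + (∑' n, f2 n) * (∑' n, g2 n) := by
  rw [tsum_mul_tsum_of_summable_norm hf.norm hg.norm,
    tsum_mul_tsum_of_summable_norm hf1.norm hg1.norm,
    tsum_mul_tsum_of_summable_norm hf2.norm hg2.norm,
    tsum_rot (summable_mul_of_summable_norm hf.norm hg.norm)]
  simp only [h1, h2]

lemma summable_pow_natAbs {p : ℝ} (h0 : 0 < p) (h1 : p < 1) :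
    Summable (fun n : ℤ => p ^ n.natAbs) := by
  apply Summable.of_nat_of_neg <;> simpa using summable_geometric_of_lt_one h0.le h1

lemma summable_qd {p : ℝ} (h0 : 0 < p) (h1 : p < 1) (s : ℤ → ℝ) (hs : ∀ n, |s n| ≤ 1)
    (f : ℤ → ℤ) (hf : ∀ n, |n| ≤ f n + 1) : Summable (fun n : ℤ => s n * p ^ (f n)) := by
  apply Summable.of_norm_bounded ((summable_pow_natAbs h0 h1).mul_right p⁻¹)
  intro n
  rw [norm_mul, Real.norm_eq_abs, Real.norm_eq_abs, abs_of_pos (zpow_pos h0 _)]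
  have : p ^ (f n) ≤ p ^ n.natAbs * p⁻¹ := by
    rw [← zpow_natCast, ← zpow_neg_one, ← zpow_add₀ h0.ne']
    apply zpow_le_zpow_right_of_le_one₀ h0 h1.le
    have := hf n
    simp only [Int.natCast_natAbs]
    omega
  calc _ ≤ 1 * p ^ f n := by gcongr; exact hs n
    _ ≤ _ := by simpa using this

lemma summable_qd1 {p : ℝ} (h0 : 0 < p) (h1 : p < 1)
    (f : ℤ → ℤ) (hf : ∀ n, |n| ≤ f n + 1) : Summable (fun n : ℤ => p ^ (f n)) := by
  simpa using summable_qd h0 h1 (fun _ => 1) (by simp) f hf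

lemma summable_qds {p : ℝ} (h0 : 0 < p) (h1 : p < 1)
    (f : ℤ → ℤ) (hf : ∀ n, |n| ≤ f n + 1) : Summable (fun n : ℤ => (-1 : ℝ) ^ n * p ^ (f n)) :=
  summable_qd h0 h1 (fun n => (-1) ^ n) (by simp [abs_zpow]) f hf

lemma abs_le_of_quad {n m : ℤ} (h1 : n ≤ m + 1) (h2 : -n ≤ m + 1) : |n| ≤ m + 1 :=
  abs_le.mpr ⟨by omega, h1⟩

lemma qb1 (n : ℤ) : |n| ≤ n ^ 2 + 1 := abs_le_of_quad (by nlinarith) (by nlinarith)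
lemma qb2 (n : ℤ) : |n| ≤ 2 * n ^ 2 + 1 := abs_le_of_quad (by nlinarith) (by nlinarith)
lemma qb3 (n : ℤ) : |n| ≤ (n ^ 2 + n) + 1 :=
  abs_le_of_quad (by nlinarith) (by nlinarith [sq_nonneg (n + 1)])
lemma qb4 (n : ℤ) : |n| ≤ (2 * n ^ 2 + 2 * n) + 1 :=
  abs_le_of_quad (by nlinarith [sq_nonneg (n + 1)]) (by nlinarith [sq_nonneg (n + 1)])
lemma qb5 (n : ℤ) : |n| ≤ (2 * n ^ 2 + n) + 1 :=
  abs_le_of_quad (by nlinarith [sq_nonneg (n + 1)]) (by nlinarith [sq_nonneg (n + 1)])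
lemma qb6 (n : ℤ) : |n| ≤ (4 * n ^ 2 + 2 * n) + 1 :=
  abs_le_of_quad (by nlinarith [sq_nonneg (n + 1)]) (by nlinarith [sq_nonneg (n + 1)])
lemma qb7 (n : ℤ) : |n| ≤ (4 * n ^ 2) + 1 :=
  abs_le_of_quad (by nlinarith [sq_nonneg (n + 1)]) (by nlinarith [sq_nonneg (n + 1)])
lemma qb8 (n : ℤ) : |n| ≤ (2 * n + 1) ^ 2 + 1 :=
  abs_le_of_quad (by nlinarith [sq_nonneg (n + 1)]) (by nlinarith [sq_nonneg (n + 1)])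
lemma qb9 (n : ℤ) : |n| ≤ (2 * n ^ 2 - 2 * n) + 1 :=
  abs_le_of_quad (by nlinarith [sq_nonneg (n - 1)]) (by nlinarith [sq_nonneg (n - 1)])
lemma qb10 (n : ℤ) : |n| ≤ (4 * n ^ 2 - 2 * n) + 1 :=
  abs_le_of_quad (by nlinarith [sq_nonneg (n - 1)]) (by nlinarith [sq_nonneg (n - 1)])

lemma tsum_negidx (f : ℤ → ℝ) : ∑' n, f (-n) = ∑' n, f n :=
  (Equiv.neg ℤ).tsum_eq f

lemma tsum_reflect (f : ℤ → ℝ) : ∑' n, f (-1 - n) = ∑' n, f n :=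
  (Equiv.subLeft (-1 : ℤ)).tsum_eq f

lemma neg_one_zpow_sq (n : ℤ) : (-1 : ℝ) ^ n * (-1) ^ n = 1 := by
  rw [← zpow_add₀ (by norm_num), ← two_mul]; exact Even.neg_one_zpow (even_two_mul n)

lemma neg_one_zpow_inv (n : ℤ) : ((-1 : ℝ) ^ n)⁻¹ = (-1) ^ n :=
  inv_eq_of_mul_eq_one_left (neg_one_zpow_sq n)

lemma phi_neg (p : ℝ) : phi (-p) = ∑' n : ℤ, (-1 : ℝ) ^ n * p ^ (n ^ 2) := by
  unfold phi
  refine tsum_congr fun n => ?_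
  rw [neg_eq_neg_one_mul, mul_zpow]
  congr 1
  rcases Int.even_or_odd n with h | h
  · rw [h.neg_one_zpow, Even.neg_one_zpow]
    exact h.pow_of_ne_zero (by norm_num)
  · rw [h.neg_one_zpow, Odd.neg_one_zpow]
    exact h.pow


lemma id_a {p : ℝ} (h0 : 0 < p) (h1 : p < 1)
    : (∑' n : ℤ, p ^ (n ^ 2)) * (∑' n : ℤ, (-1 : ℝ) ^ n * p ^ (n ^ 2)) =
    (∑' n : ℤ, (-1 : ℝ) ^ n * p ^ (2 * n ^ 2)) ^ 2 := by
  have hX : ∑' n : ℤ, (-1 : ℝ) ^ n * p ^ (2 * n ^ 2 + 2 * n) = 0 := by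
    have h := tsum_reflect (fun n : ℤ => (-1 : ℝ) ^ n * p ^ (2 * n ^ 2 + 2 * n))
    have h2 : ∀ n : ℤ, (-1 : ℝ) ^ (-1 - n) * p ^ (2 * (-1 - n) ^ 2 + 2 * (-1 - n)) =
        -((-1 : ℝ) ^ n * p ^ (2 * n ^ 2 + 2 * n)) := by
      intro n
      rw [show 2 * (-1 - n) ^ 2 + 2 * (-1 - n) = 2 * n ^ 2 + 2 * n by ring,
        zpow_sub₀ (by norm_num)]
      have := neg_one_zpow_sq n
      have h3 : ((-1 : ℝ) ^ n)⁻¹ = (-1) ^ n := inv_eq_of_mul_eq_one_left this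
      rw [div_eq_mul_inv, h3]; norm_num
    simp only [h2, tsum_neg] at h
    linarith
  rw [mul_rot (summable_qd1 h0 h1 _ qb1) (summable_qds h0 h1 _ qb1)
    (summable_qds h0 h1 _ qb2) (summable_qds h0 h1 _ qb2)
    ((summable_qds h0 h1 _ qb9).mul_right (-p)) (summable_qds h0 h1 _ qb4) _ _, hX]
  · ring
  · intro c d
    rw [zpow_sub₀ (by norm_num), div_eq_mul_inv, ← zpow_neg, mul_left_comm, ← zpow_add₀ h0.ne']
    have : (-1 : ℝ) ^ (-d) = (-1) ^ d := by rw [zpow_neg, neg_one_zpow_inv]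
    rw [this, show (c + d) ^ 2 + (c - d) ^ 2 = 2 * c ^ 2 + 2 * d ^ 2 by ring, zpow_add₀ h0.ne']
    ring
  · intro c d
    rw [zpow_sub₀ (by norm_num), zpow_sub₀ (by norm_num), div_eq_mul_inv ((-1 : ℝ) ^ c),
      ← zpow_neg, mul_left_comm, ← zpow_add₀ h0.ne']
    have : (-1 : ℝ) ^ (-d) = (-1) ^ d := by rw [zpow_neg, neg_one_zpow_inv]
    rw [this, show (c + d) ^ 2 + (c - d - 1) ^ 2 = (2 * c ^ 2 - 2 * c) + (2 * d ^ 2 + 2 * d) + 1 by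
      ring, zpow_add₀ h0.ne', zpow_add₀ h0.ne', zpow_one, zpow_one]
    ring

lemma tsum_K {p : ℝ} (h0 : 0 < p) (h1 : p < 1)
    : ∑' n : ℤ, p ^ (2 * n ^ 2 - 2 * n) = ∑' n : ℤ, p ^ (2 * n ^ 2 + 2 * n) := by
  rw [← tsum_negidx]
  refine tsum_congr fun n => ?_
  ring_nf

lemma id_b {p : ℝ} (h0 : 0 < p) (h1 : p < 1)
    : (∑' n : ℤ, p ^ (n ^ 2)) ^ 2 =
    (∑' n : ℤ, p ^ (2 * n ^ 2)) ^ 2 + p * (∑' n : ℤ, p ^ (2 * n ^ 2 + 2 * n)) ^ 2 := by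
  rw [sq, mul_rot (summable_qd1 h0 h1 _ qb1) (summable_qd1 h0 h1 _ qb1)
    (summable_qd1 h0 h1 _ qb2) (summable_qd1 h0 h1 _ qb2)
    ((summable_qd1 h0 h1 _ qb9).mul_right p) (summable_qd1 h0 h1 _ qb4) _ _, tsum_mul_right,
    tsum_K h0 h1]
  · ring
  · intro c d
    rw [← zpow_add₀ h0.ne', ← zpow_add₀ h0.ne']; ring_nf
  · intro c d
    rw [← zpow_add₀ h0.ne', show (c + d) ^ 2 + (c - d - 1) ^ 2 =
      (2 * c ^ 2 - 2 * c) + 1 + (2 * d ^ 2 + 2 * d)  by ring, zpow_add₀ h0.ne', zpow_add₀ h0.ne',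
      zpow_one]

lemma id_b' {p : ℝ} (h0 : 0 < p) (h1 : p < 1)
    : (∑' n : ℤ, (-1 : ℝ) ^ n * p ^ (n ^ 2)) ^ 2 =
    (∑' n : ℤ, p ^ (2 * n ^ 2)) ^ 2 - p * (∑' n : ℤ, p ^ (2 * n ^ 2 + 2 * n)) ^ 2 := by
  rw [sq, mul_rot (summable_qds h0 h1 _ qb1) (summable_qds h0 h1 _ qb1)
    (summable_qd1 h0 h1 _ qb2) (summable_qd1 h0 h1 _ qb2)
    ((summable_qd1 h0 h1 _ qb9).mul_right (-p)) (summable_qd1 h0 h1 _ qb4) _ _, tsum_mul_right,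
    tsum_K h0 h1]
  · ring
  · intro c d
    have : (-1 : ℝ) ^ (c + d) * (-1) ^ (c - d) = 1 := by
      rw [← zpow_add₀ (by norm_num)]; apply Even.neg_one_zpow; exact ⟨c, by ring⟩
    rw [mul_mul_mul_comm, this, ← zpow_add₀ h0.ne', ← zpow_add₀ h0.ne']; ring_nf
  · intro c d
    have : (-1 : ℝ) ^ (c + d) * (-1) ^ (c - d - 1) = -1 := by
      rw [← zpow_add₀ (by norm_num)]; apply Odd.neg_one_zpow; exact ⟨c - 1, by ring⟩
    rw [mul_mul_mul_comm, this, ← zpow_add₀ h0.ne', show (c + d) ^ 2 + (c - d - 1) ^ 2 =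
      (2 * c ^ 2 - 2 * c) + 1 + (2 * d ^ 2 + 2 * d)  by ring, zpow_add₀ h0.ne', zpow_add₀ h0.ne',
      zpow_one]
    ring

lemma id_c {p : ℝ} (h0 : 0 < p) (h1 : p < 1)
    : (∑' n : ℤ, p ^ (n ^ 2 + n)) ^ 2 =
    2 * (∑' n : ℤ, p ^ (2 * n ^ 2)) * (∑' n : ℤ, p ^ (2 * n ^ 2 + 2 * n)) := by
  rw [sq, mul_rot (summable_qd1 h0 h1 _ qb3) (summable_qd1 h0 h1 _ qb3)
    (summable_qd1 h0 h1 _ qb4) (summable_qd1 h0 h1 _ qb2)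
    (summable_qd1 h0 h1 _ qb2) (summable_qd1 h0 h1 _ qb4) _ _]
  · ring
  · intro c d
    rw [← zpow_add₀ h0.ne', ← zpow_add₀ h0.ne']; ring_nf
  · intro c d
    rw [← zpow_add₀ h0.ne', ← zpow_add₀ h0.ne']; ring_nf

lemma id_J {p : ℝ} (h0 : 0 < p) (h1 : p < 1)
    : ∑' n : ℤ, p ^ (n ^ 2 + n) = 2 * ∑' n : ℤ, p ^ (4 * n ^ 2 + 2 * n) := by
  rw [tsum_even_odd (summable_qd1 h0 h1 _ qb3), two_mul]
  congr 1
  · refine tsum_congr fun n => ?_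
    ring_nf
  · rw [← tsum_reflect]
    refine tsum_congr fun n => ?_
    ring_nf

lemma id_phi {p : ℝ} (h0 : 0 < p) (h1 : p < 1)
    : ∑' n : ℤ, (-1 : ℝ) ^ n * p ^ (n ^ 2) =
    ∑' n : ℤ, p ^ (4 * n ^ 2) - ∑' n : ℤ, p ^ ((2 * n + 1) ^ 2) := by
  rw [tsum_even_odd (summable_qds h0 h1 _ qb1), sub_eq_add_neg, ← tsum_neg]
  congr 1
  · refine tsum_congr fun n => ?_
    rw [Even.neg_one_zpow (even_two_mul n)]; ring_nf
  · refine tsum_congr fun n => ?_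
    rw [Odd.neg_one_zpow (odd_two_mul_add_one n)]; ring_nf

lemma id_d {p : ℝ} (h0 : 0 < p) (h1 : p < 1)
    : (∑' n : ℤ, (-1 : ℝ) ^ n * p ^ (2 * n ^ 2 + n)) ^ 2 =
    (∑' n : ℤ, (-1 : ℝ) ^ n * p ^ (n ^ 2)) * (∑' n : ℤ, p ^ (n ^ 2 + n)) / 2 := by
  rw [sq, mul_rot (summable_qds h0 h1 _ qb5) (summable_qds h0 h1 _ qb5)
    (summable_qd1 h0 h1 _ qb6) (summable_qd1 h0 h1 _ qb7)
    (summable_qd1 h0 h1 _ qb10).neg (summable_qd1 h0 h1 _ qb8) _ _, tsum_neg,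
    id_J h0 h1, id_phi h0 h1]
  · have : ∑' n : ℤ, p ^ (4 * n ^ 2 - 2 * n) = ∑' n : ℤ, p ^ (4 * n ^ 2 + 2 * n) := by
      rw [← tsum_negidx]
      refine tsum_congr fun n => ?_
      ring_nf
    rw [this]
    ring
  · intro c d
    have : (-1 : ℝ) ^ (c + d) * (-1) ^ (c - d) = 1 := by
      rw [← zpow_add₀ (by norm_num)]; apply Even.neg_one_zpow; exact ⟨c, by ring⟩
    rw [mul_mul_mul_comm, this, ← zpow_add₀ h0.ne', ← zpow_add₀ h0.ne']; ring_nf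
  · intro c d
    have : (-1 : ℝ) ^ (c + d) * (-1) ^ (c - d - 1) = -1 := by
      rw [← zpow_add₀ (by norm_num)]; apply Odd.neg_one_zpow; exact ⟨c - 1, by ring⟩
    rw [mul_mul_mul_comm, this, ← zpow_add₀ h0.ne', neg_mul, one_mul, neg_mul,
      ← zpow_add₀ h0.ne']
    ring_nf

lemma id_main {p : ℝ} (h0 : 0 < p) (h1 : p < 1)
    (hE : (∑' n : ℤ, (-1 : ℝ) ^ n * p ^ (2 * n ^ 2)) ≠ 0) :
    1 - (phi (-p)) ^ 4 / (phi p) ^ 4 =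
     16 * p * ((∑' n : ℤ, (-1 : ℝ) ^ n * p ^ (2 * n ^ 2 + n)) /
       (∑' n : ℤ, (-1 : ℝ) ^ n * p ^ (2 * n ^ 2))) ^ 8 := by
  rw [phi_neg p, phi]
  have a := id_a h0 h1
  have b := id_b h0 h1
  have b' := id_b' h0 h1
  have c := id_c h0 h1
  have d := id_d h0 h1
  set A := ∑' n : ℤ, p ^ (n ^ 2)
  set B := ∑' n : ℤ, (-1 : ℝ) ^ n * p ^ (n ^ 2)
  set E := ∑' n : ℤ, (-1 : ℝ) ^ n * p ^ (2 * n ^ 2)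
  set G := ∑' n : ℤ, (-1 : ℝ) ^ n * p ^ (2 * n ^ 2 + n)
  set J := ∑' n : ℤ, p ^ (n ^ 2 + n)
  set H := ∑' n : ℤ, p ^ (2 * n ^ 2)
  set K := ∑' n : ℤ, p ^ (2 * n ^ 2 + 2 * n)
  have hAB : A * B ≠ 0 := by rw [a]; positivity
  have hA : A ≠ 0 := left_ne_zero_of_mul hAB
  have hB : B ≠ 0 := right_ne_zero_of_mul hAB
  have e8 : E ^ 8 = A ^ 4 * B ^ 4 := by rw [← mul_pow, a]; ring
  have g8 : G ^ 8 = B ^ 4 * J ^ 4 / 16 := by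
    rw [show G ^ 8 = (G ^ 2) ^ 4 by ring, d]; ring
  have k : A ^ 4 - B ^ 4 = p * J ^ 4 := by
    rw [show A ^ 4 = (A ^ 2) ^ 2 by ring, show B ^ 4 = (B ^ 2) ^ 2 by ring,
      show J ^ 4 = (J ^ 2) ^ 2 by ring, b, b', c]; ring
  rw [div_pow, e8, g8]
  field_simp
  linear_combination k


lemma wcos_one (m : ℤ) : Real.cos (((4 * m + 1 : ℤ) : ℝ) * (Real.pi / 4)) =
    (-1) ^ m * (Real.sqrt 2 / 2) := by
  rw [show ((4 * m + 1 : ℤ) : ℝ) * (Real.pi / 4) = Real.pi / 4 + m * Real.pi by push_cast; ring,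
    Real.cos_add_int_mul_pi, Real.cos_pi_div_four]

lemma vcos (k : ℤ) : Real.cos ((k : ℝ) * (3 * Real.pi / 4)) =
    (-1) ^ k * Real.cos ((k : ℝ) * (Real.pi / 4)) := by
  rw [← Real.cos_int_mul_pi_sub]; congr 1; ring

lemma cos_three : Real.cos (3 * Real.pi / 4) = -(Real.sqrt 2 / 2) := by
  have := vcos 1
  simp [Real.cos_pi_div_four] at this
  exact this

lemma theta_split {q : ℝ} (h0 : 0 < q) (h1 : q < 1) :
    (∑' k : ℤ, q ^ (k ^ 2) * Real.cos ((k : ℝ) * (Real.pi / 4)) =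
      (∑' n : ℤ, (-1 : ℝ) ^ n * (q ^ 8) ^ (2 * n ^ 2)) +
      Real.sqrt 2 * q * ∑' n : ℤ, (-1 : ℝ) ^ n * (q ^ 8) ^ (2 * n ^ 2 + n)) ∧
    (∑' k : ℤ, q ^ (k ^ 2) * Real.cos ((k : ℝ) * (3 * Real.pi / 4)) =
      (∑' n : ℤ, (-1 : ℝ) ^ n * (q ^ 8) ^ (2 * n ^ 2)) -
      Real.sqrt 2 * q * ∑' n : ℤ, (-1 : ℝ) ^ n * (q ^ 8) ^ (2 * n ^ 2 + n)) := by
  have hsw : Summable (fun k : ℤ => q ^ (k ^ 2) * Real.cos ((k : ℝ) * (Real.pi / 4))) :=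
    (summable_qd h0 h1 (fun k => Real.cos ((k : ℝ) * (Real.pi / 4)))
      (fun k => Real.abs_cos_le_one _) _ qb1).congr fun k => mul_comm _ _
  have hsv : Summable (fun k : ℤ => q ^ (k ^ 2) * Real.cos ((k : ℝ) * (3 * Real.pi / 4))) :=
    (summable_qd h0 h1 (fun k => Real.cos ((k : ℝ) * (3 * Real.pi / 4)))
      (fun k => Real.abs_cos_le_one _) _ qb1).congr fun k => mul_comm _ _
  have i2 : Function.Injective (fun n : ℤ => 2 * n) := by
    intro a b h; simp at h; omega
  have i3 : Function.Injective (fun n : ℤ => 2 * n + 1) := by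
    intro a b h; simp at h; omega
  have pe : ∀ z : ℤ, (q ^ 8) ^ z = q ^ (8 * z) := by
    intro z; rw [zpow_mul]; rfl
  obtain ⟨W, hW⟩ : ∃ W : ℤ → ℝ, W = fun k : ℤ => q ^ (k ^ 2) * Real.cos ((k : ℝ) * (Real.pi / 4)) :=
    ⟨_, rfl⟩
  have hWk : ∀ k : ℤ, q ^ (k ^ 2) * Real.cos ((k : ℝ) * (Real.pi / 4)) = W k := by
    intro k; rw [hW]
  rw [← hW] at hsw
  have hVk : ∀ k : ℤ, q ^ (k ^ 2) * Real.cos ((k : ℝ) * (3 * Real.pi / 4)) = (-1) ^ k * W k := by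
    intro k; rw [vcos, hW]; ring
  simp only [hVk] at hsv
  simp only [hWk, hVk]
  have hE : ∑' n : ℤ, W (2 * n) = ∑' n : ℤ, (-1 : ℝ) ^ n * (q ^ 8) ^ (2 * n ^ 2) := by
    rw [tsum_even_odd (f := fun n => W (2 * n)) (hsw.comp_injective i2)]
    have : ∀ n : ℤ, W (2 * (2 * n + 1)) = 0 := by
      intro n
      rw [← hWk, show ((2 * (2 * n + 1) : ℤ) : ℝ) * (Real.pi / 4) = Real.pi / 2 + n * Real.pi by
        push_cast; ring, Real.cos_add_int_mul_pi, Real.cos_pi_div_two]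
      simp
    rw [tsum_congr this, tsum_zero, add_zero]
    refine tsum_congr fun n => ?_
    rw [← hWk, show ((2 * (2 * n) : ℤ) : ℝ) * (Real.pi / 4) = 0 + n * Real.pi by
        push_cast; ring, Real.cos_add_int_mul_pi, Real.cos_zero, pe, mul_comm]
    ring_nf
  have hO : ∑' n : ℤ, W (2 * n + 1) =
      Real.sqrt 2 * q * ∑' n : ℤ, (-1 : ℝ) ^ n * (q ^ 8) ^ (2 * n ^ 2 + n) := by
    rw [tsum_even_odd (f := fun n => W (2 * n + 1)) (hsw.comp_injective i3),
      ← tsum_reflect (fun n : ℤ => W (2 * (2 * n + 1) + 1))]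
    have key : ∀ n : ℤ, W (4 * n + 1) =
        (Real.sqrt 2 / 2 * q) * ((-1 : ℝ) ^ n * (q ^ 8) ^ (2 * n ^ 2 + n)) := by
      intro n
      rw [← hWk, wcos_one, pe, show (4 * n + 1) ^ 2 = 8 * (2 * n ^ 2 + n) + 1 by ring,
        zpow_add₀ h0.ne', zpow_one]
      ring
    have e1 : ∀ n : ℤ, W (2 * (2 * n) + 1) =
        (Real.sqrt 2 / 2 * q) * ((-1 : ℝ) ^ n * (q ^ 8) ^ (2 * n ^ 2 + n)) := by
      intro n
      rw [← key, show 2 * (2 * n) + 1 = 4 * n + 1 by ring]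
    have e2 : ∀ n : ℤ, W (2 * (2 * (-1 - n) + 1) + 1) =
        (Real.sqrt 2 / 2 * q) * ((-1 : ℝ) ^ n * (q ^ 8) ^ (2 * n ^ 2 + n)) := by
      intro n
      rw [← key, show 2 * (2 * (-1 - n) + 1) + 1 = -(4 * n + 1) by ring, ← hWk, ← hWk, neg_sq,
        Int.cast_neg, neg_mul, Real.cos_neg]
    rw [tsum_congr e1, tsum_congr e2, tsum_mul_left]
    ring
  constructor
  · rw [tsum_even_odd hsw, hE, hO]
  · rw [tsum_even_odd hsv, ← hE, ← hO, sub_eq_add_neg, ← tsum_neg]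
    congr 1
    · refine tsum_congr fun n => ?_
      rw [Even.neg_one_zpow (even_two_mul n), one_mul]
    · refine tsum_congr fun n => ?_
      rw [Odd.neg_one_zpow (odd_two_mul_add_one n)]; ring

lemma hasSum_cos_log {t : ℝ} (h0 : 0 < t) (h1 : t < 1) (θ : ℝ) :
    HasSum (fun n : ℕ => t ^ n * Real.cos (n * θ) / n)
      (-(1 / 2 * Real.log (1 - 2 * t * Real.cos θ + t ^ 2))) := by
  have hz : ‖(t : ℂ) * Complex.exp (θ * Complex.I)‖ < 1 := by
    rw [norm_mul, Complex.norm_exp_ofReal_mul_I, mul_one, Complex.norm_real, Real.norm_eq_abs,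
      abs_of_pos h0]
    exact h1
  have h := Complex.hasSum_re (Complex.hasSum_taylorSeries_neg_log hz)
  have e : (-Complex.log (1 - (t : ℂ) * Complex.exp (θ * Complex.I))).re =
      -(1 / 2 * Real.log (1 - 2 * t * Real.cos θ + t ^ 2)) := by
    rw [Complex.neg_re, Complex.log_re]
    congr 1
    have : ‖1 - (t : ℂ) * Complex.exp (θ * Complex.I)‖ ^ 2 = 1 - 2 * t * Real.cos θ + t ^ 2 := by
      rw [← Complex.normSq_eq_norm_sq, Complex.normSq_apply]
      simp only [Complex.sub_re, Complex.one_re, Complex.mul_re, Complex.ofReal_re,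
        Complex.exp_ofReal_mul_I_re, Complex.ofReal_im, Complex.exp_ofReal_mul_I_im,
        Complex.sub_im, Complex.one_im, Complex.mul_im]
      linear_combination t ^ 2 * (Real.sin_sq_add_cos_sq θ)
    rw [← this, Real.log_pow]
    push_cast; ring
  rw [e] at h
  refine h.congr_fun ?_ |> fun h => h
  intro n
  rw [mul_pow, ← Complex.exp_nat_mul, ← mul_assoc, ← Complex.ofReal_pow,
    Complex.div_natCast_re, Complex.re_ofReal_mul,
    show ((n : ℂ) * (θ : ℂ)) = ((n * θ : ℝ) : ℂ) by push_cast; rfl, Complex.exp_ofReal_mul_I_re]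

lemma hasSum_chi_log {t : ℝ} (h0 : 0 < t) (h1 : t < 1) :
    HasSum (fun n : ℤ => (-1 : ℝ) ^ n * t ^ (4 * n + 1).natAbs / ((4 * n + 1).natAbs : ℝ))
      (-(1 / (2 * Real.sqrt 2)) * Real.log ((1 + -Real.sqrt 2 * t + t ^ 2) /
        (1 + Real.sqrt 2 * t + t ^ 2))) := by
  have s2 : Real.sqrt 2 * Real.sqrt 2 = 2 := Real.mul_self_sqrt (by norm_num)
  have s0 : 0 < Real.sqrt 2 := by positivity
  have A := (hasSum_cos_log h0 h1 (Real.pi / 4)).sub (hasSum_cos_log h0 h1 (3 * Real.pi / 4))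
  rw [Real.cos_pi_div_four, cos_three] at A
  have inj : Function.Injective (fun n : ℤ => (4 * n + 1).natAbs) := by
    intro a b h; simp only at h; omega
  have vn : ∀ n : ℕ, Real.cos (n * (3 * Real.pi / 4)) =
      (-1) ^ n * Real.cos (n * (Real.pi / 4)) := by
    intro n; simpa using vcos n
  have hz : ∀ n ∉ Set.range (fun n : ℤ => (4 * n + 1).natAbs),
      t ^ n * Real.cos (n * (Real.pi / 4)) / n - t ^ n * Real.cos (n * (3 * Real.pi / 4)) / n
        = 0 := by
    intro n hn
    have he : Even n := by
      by_contra ho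
      rw [Nat.not_even_iff] at ho
      apply hn
      have : n % 4 = 1 ∨ n % 4 = 3 := by omega
      rcases this with h | h
      · exact ⟨n / 4, by simp only; omega⟩
      · exact ⟨-(n / 4) - 1, by simp only; omega⟩
    rw [vn, he.neg_one_pow, one_mul, sub_self]
  have B := ((inj.hasSum_iff hz).mpr A).mul_left (1 / Real.sqrt 2)
  have p1 : 0 < 1 + -Real.sqrt 2 * t + t ^ 2 := by nlinarith [sq_nonneg (Real.sqrt 2 * t - 1)]
  have p2 : 0 < 1 + Real.sqrt 2 * t + t ^ 2 := by positivity
  convert! B using 1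
  · funext n
    simp only [Function.comp]
    have hodd : Odd (4 * n + 1).natAbs := by
      rw [Int.natAbs_odd]; exact ⟨2 * n, by ring⟩
    have hc : Real.cos (((4 * n + 1).natAbs : ℝ) * (Real.pi / 4)) =
        (-1) ^ n * (Real.sqrt 2 / 2) := by
      rw [← wcos_one, Nat.cast_natAbs]
      rcases abs_choice (4 * n + 1) with h | h
      · rw [h]
      · rw [h, Int.cast_neg, neg_mul, Real.cos_neg]
    rw [vn, hodd.neg_one_pow, hc]
    field_simp
    ring
  · rw [Real.log_div p1.ne' p2.ne']
    have r1 : 1 - 2 * t * (Real.sqrt 2 / 2) + t ^ 2 = 1 + -Real.sqrt 2 * t + t ^ 2 := by ring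
    have r2 : 1 - 2 * t * -(Real.sqrt 2 / 2) + t ^ 2 = 1 + Real.sqrt 2 * t + t ^ 2 := by ring
    rw [r1, r2]
    field_simp
    ring

lemma hasSum_coth {y : ℝ} (hy : y ≠ 0) :
    HasSum (fun m : ℤ => 1 / ((m : ℝ) ^ 2 + y ^ 2))
      (Real.pi / y * (Real.cosh (Real.pi * y) / Real.sinh (Real.pi * y))) := by
  have hsin : Real.sinh (Real.pi * y) ≠ 0 := by
    rw [Ne, Real.sinh_eq_zero]; exact mul_ne_zero Real.pi_ne_zero hy
  have hz : ((y : ℂ) * Complex.I) ∈ Complex.integerComplement := by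
    rw [Complex.mem_integerComplement_iff]
    rintro ⟨n, hn⟩
    have := congrArg Complex.im hn
    simp at this
    exact hy this.symm
  have h := cot_series_rep' hz
  have hS : Summable (fun n : ℕ => 1 / (((n : ℝ) + 1) ^ 2 + y ^ 2)) := by
    have := (summable_nat_add_iff 1).mpr (Real.summable_one_div_nat_pow.mpr (one_lt_two))
    refine this.of_nonneg_of_le (fun n => by positivity) fun n => ?_
    push_cast
    apply one_div_le_one_div_of_le (by positivity)
    nlinarith [sq_nonneg y]
  have term : ∀ n : ℕ, (1 / ((y : ℂ) * Complex.I - (n + 1)) + 1 / ((y : ℂ) * Complex.I + (n + 1))) =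
      -2 * y * Complex.I * ((1 / (((n : ℝ) + 1) ^ 2 + y ^ 2) : ℝ) : ℂ) := by
    intro n
    have a1 : ((y : ℂ) * Complex.I - (n + 1)) ≠ 0 := by
      intro h; have := congrArg Complex.im h; simp at this; exact hy this
    have a2 : ((y : ℂ) * Complex.I + (n + 1)) ≠ 0 := by
      intro h; have := congrArg Complex.im h; simp at this; exact hy this
    have a3 : (((n : ℂ) + 1) ^ 2 + y ^ 2) ≠ 0 := by
      have : (((n : ℝ) + 1) ^ 2 + y ^ 2) ≠ 0 := by positivity
      exact_mod_cast this
    push_cast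
    field_simp
    linear_combination (2 * (y : ℂ) ^ 3 * Complex.I) * Complex.I_sq
  rw [tsum_congr term, tsum_mul_left, ← Complex.ofReal_tsum] at h
  have hcot : Complex.cot (Real.pi * ((y : ℂ) * Complex.I)) =
      -Complex.I * ((Real.cosh (Real.pi * y) / Real.sinh (Real.pi * y) : ℝ) : ℂ) := by
    rw [Complex.cot, ← mul_assoc, Complex.cos_mul_I, Complex.sin_mul_I]
    have : Complex.sinh (Real.pi * y) ≠ 0 := by exact_mod_cast hsin
    push_cast
    field_simp
    linear_combination Complex.cosh (Real.pi * y) * Complex.I_sq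
  rw [hcot] at h
  set T := ∑' n : ℕ, 1 / (((n : ℝ) + 1) ^ 2 + y ^ 2) with hT
  set C := Real.cosh (Real.pi * y) / Real.sinh (Real.pi * y) with hC
  have hyc : (y : ℂ) ≠ 0 := by exact_mod_cast hy
  have h2 : Real.pi * C - 1 / y = 2 * y * T := by
    have : ((Real.pi * C - 1 / y : ℝ) : ℂ) = ((2 * y * T : ℝ) : ℂ) := by
      push_cast
      field_simp at h ⊢
      linear_combination h + (Real.pi * C * y - 2 * y ^ 2 * T : ℂ) * Complex.I_sq
    exact_mod_cast this
  have hT1 := hS.hasSum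
  rw [← hT] at hT1
  clear_value T C
  have := HasSum.of_add_one_of_neg_add_one (f := fun m : ℤ => 1 / ((m : ℝ) ^ 2 + y ^ 2))
    (m := T) (m' := T)
    (by
      refine hT1.congr_fun ?_ |> fun h => h
      intro n; push_cast; rfl) (by
      refine hT1.congr_fun ?_ |> fun h => h
      intro n; push_cast; rw [neg_sq])
  convert! this using 1
  have hT2 : T = (Real.pi * C - 1 / y) / (2 * y) := by rw [h2]; field_simp
  rw [hT2]
  push_cast
  field_simp
  ring

lemma tsum_csch {y : ℝ} (hy : y ≠ 0) :
    ∑' m : ℤ, (-1 : ℝ) ^ m / ((m : ℝ) ^ 2 + y ^ 2) = Real.pi / (y * Real.sinh (Real.pi * y)) := by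
  have H := hasSum_coth hy
  have H2 := hasSum_coth (y := y / 2) (by positivity)
  have hs : Summable (fun m : ℤ => (-1 : ℝ) ^ m / ((m : ℝ) ^ 2 + y ^ 2)) := by
    refine H.summable.of_norm_bounded fun m => ?_
    rw [norm_div, Real.norm_eq_abs, Real.norm_eq_abs, abs_zpow, abs_neg, abs_one, one_zpow,
      abs_of_nonneg (by positivity)]
  have t1 := tsum_even_odd hs
  have t2 := tsum_even_odd H.summable
  have e1 : ∑' n : ℤ, (-1 : ℝ) ^ (2 * n) / (((2 * n : ℤ) : ℝ) ^ 2 + y ^ 2) =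
      1 / 4 * ∑' n : ℤ, 1 / ((n : ℝ) ^ 2 + (y / 2) ^ 2) := by
    rw [← tsum_mul_left]
    refine tsum_congr fun n => ?_
    rw [Even.neg_one_zpow (even_two_mul n)]
    push_cast
    rw [show (2 * (n : ℝ)) ^ 2 + y ^ 2 = 4 * ((n : ℝ) ^ 2 + (y / 2) ^ 2) by ring]
    rw [one_div_mul_one_div]
  have e2 : ∑' n : ℤ, 1 / (((2 * n : ℤ) : ℝ) ^ 2 + y ^ 2) =
      1 / 4 * ∑' n : ℤ, 1 / ((n : ℝ) ^ 2 + (y / 2) ^ 2) := by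
    rw [← e1]
    refine tsum_congr fun n => ?_
    rw [Even.neg_one_zpow (even_two_mul n)]
  have e3 : ∑' n : ℤ, (-1 : ℝ) ^ (2 * n + 1) / (((2 * n + 1 : ℤ) : ℝ) ^ 2 + y ^ 2) =
      -∑' n : ℤ, 1 / (((2 * n + 1 : ℤ) : ℝ) ^ 2 + y ^ 2) := by
    rw [← tsum_neg]
    refine tsum_congr fun n => ?_
    rw [Odd.neg_one_zpow (odd_two_mul_add_one n), neg_div]
  rw [e1, e3] at t1
  rw [e2, H.tsum_eq] at t2
  rw [t1, H2.tsum_eq]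
  rw [H2.tsum_eq] at t2
  have hh : Real.pi * y = 2 * (Real.pi * (y / 2)) := by ring
  have hsin : Real.sinh (Real.pi * (y / 2)) ≠ 0 := by
    rw [Ne, Real.sinh_eq_zero]; exact mul_ne_zero Real.pi_ne_zero (by positivity)
  have hcos : Real.cosh (Real.pi * (y / 2)) ≠ 0 := (Real.cosh_pos _).ne'
  rw [hh, Real.sinh_two_mul, Real.cosh_two_mul] at t2
  rw [hh, Real.sinh_two_mul]
  have hsq := Real.cosh_sq (Real.pi * (y / 2))
  set s := Real.sinh (Real.pi * (y / 2))
  set c := Real.cosh (Real.pi * (y / 2))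
  set X := ∑' n : ℤ, 1 / (((2 * n + 1 : ℤ) : ℝ) ^ 2 + y ^ 2)
  have hX : X = Real.pi / y * ((c ^ 2 + s ^ 2) / (2 * s * c)) -
    1 / 4 * (Real.pi / (y / 2) * (c / s)) := by linarith
  rw [hX]
  field_simp
  linear_combination 4 * hsq

/-- The finite product `(Q; Q)_n`. -/
noncomputable def qD (Q : ℝ) (n : ℕ) : ℝ := ∏ i ∈ Finset.range n, (1 - Q ^ (i + 1))

/-- `1 / (Q; Q)_n`, extended by zero to negative `n`. -/
noncomputable def qE (Q : ℝ) (n : ℤ) : ℝ := if n < 0 then 0 else (qD Q n.toNat)⁻¹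


lemma qfac_pos {Q : ℝ} (h0 : 0 < Q) (h1 : Q < 1)
    (i : ℕ) : 0 < 1 - Q ^ (i + 1) := by
  have := pow_lt_one₀ h0.le h1 (Nat.succ_ne_zero i)
  simp only [Nat.succ_eq_add_one] at this
  linarith

lemma qD_pos {Q : ℝ} (h0 : 0 < Q) (h1 : Q < 1)
    (n : ℕ) : 0 < qD Q n := Finset.prod_pos fun i _ => qfac_pos h0 h1 i

lemma qD_anti {Q : ℝ} (h0 : 0 < Q) (h1 : Q < 1)
    : Antitone (qD Q) := by
  apply antitone_nat_of_succ_le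
  intro n
  rw [qD, Finset.prod_range_succ, ← qD]
  have := qD_pos h0 h1 n
  have h2 : 0 < Q ^ (n + 1) := by positivity
  nlinarith

lemma qD_le_one {Q : ℝ} (h0 : 0 < Q) (h1 : Q < 1)
    (n : ℕ) : qD Q n ≤ 1 := by
  have := qD_anti h0 h1 (Nat.zero_le n)
  simpa [qD] using this

lemma qD_lim {Q : ℝ} (h0 : 0 < Q) (h1 : Q < 1)
    : ∃ L : ℝ, 0 < L ∧ Tendsto (qD Q) atTop (nhds L) := by
  have hs : Summable (fun i : ℕ => ‖-Q ^ (i + 1)‖) := by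
    have := (summable_geometric_of_lt_one h0.le h1).mul_right Q
    refine this.congr fun i => ?_
    rw [norm_neg, Real.norm_eq_abs, abs_of_pos (by positivity), pow_succ]
  have hm := (multipliable_one_add_of_summable hs).hasProd.tendsto_prod_nat
  have hne := tprod_one_add_ne_zero_of_summable (f := fun i : ℕ => -Q ^ (i + 1))
    (fun i => by have := qfac_pos h0 h1 i; rw [← sub_eq_add_neg]; exact this.ne') hs
  have ht : Tendsto (qD Q) atTop (nhds (∏' i : ℕ, (1 + -Q ^ (i + 1)))) := by
    refine hm.congr fun n => ?_
    simp [qD, sub_eq_add_neg]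
  refine ⟨_, lt_of_le_of_ne ?_ hne.symm, ht⟩
  exact ge_of_tendsto' ht fun n => (qD_pos h0 h1 n).le

lemma qE_nonneg {Q : ℝ} (h0 : 0 < Q) (h1 : Q < 1)
    (n : ℤ) : 0 ≤ qE Q n := by
  unfold qE
  split_ifs
  · rfl
  · exact (inv_pos.mpr (qD_pos h0 h1 _)).le

lemma qE_rec {Q : ℝ} (h0 : 0 < Q) (h1 : Q < 1)
    (n : ℤ) : qE Q (n - 1) = (1 - Q ^ n) * qE Q n := by
  rcases lt_trichotomy n 0 with h | h | h
  · simp [qE, h, show n < 1 by omega]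
  · subst h; simp [qE]
  · obtain ⟨m, rfl⟩ : ∃ m : ℕ, n = m + 1 := ⟨(n - 1).toNat, by omega⟩
    have e1 : ((m : ℤ) + 1 - 1) = m := by ring
    have e2 : ((m : ℤ) + 1) = ((m + 1 : ℕ) : ℤ) := by push_cast; ring
    rw [e1, e2, zpow_natCast]
    simp only [qE, Int.toNat_natCast, not_lt.mpr (Int.natCast_nonneg _), if_false]
    rw [show qD Q (m + 1) = qD Q m * (1 - Q ^ (m + 1)) from Finset.prod_range_succ _ _]
    have := (qfac_pos h0 h1 m).ne'
    have := (qD_pos h0 h1 m).ne'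
    field_simp

lemma qE_lim {Q : ℝ} (h0 : 0 < Q) (h1 : Q < 1)
    : ∃ L : ℝ, 0 < L ∧ (∀ n, qE Q n ≤ L) ∧ Tendsto (qE Q) atTop (nhds L) := by
  obtain ⟨L, hL, ht⟩ := qD_lim h0 h1
  refine ⟨L⁻¹, inv_pos.mpr hL, fun n => ?_, ?_⟩
  · unfold qE
    split_ifs
    · exact (inv_pos.mpr hL).le
    · exact inv_anti₀ hL ((qD_anti h0 h1).le_of_tendsto ht _)
  · have h2 : Tendsto (fun n : ℤ => (qD Q n.toNat)⁻¹) atTop (nhds L⁻¹) := by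
      refine (ht.inv₀ hL.ne').comp ?_
      rw [tendsto_atTop]
      intro b
      filter_upwards [eventually_ge_atTop (b : ℤ)] with a ha
      omega
    refine h2.congr' ?_
    filter_upwards [eventually_ge_atTop (0 : ℤ)] with a ha
    simp [qE, not_lt.mpr ha]



lemma fin_summable (q : ℝ) (N : ℕ) (w : ℤ → ℝ) :
    Summable (fun k : ℤ => qE (q ^ 2) (N + k) * qE (q ^ 2) (N - k) * q ^ (k ^ 2) * w k) := by
  apply summable_of_ne_finset_zero (s := Finset.Icc (-(N : ℤ)) N)
  intro k hk
  rw [Finset.mem_Icc, not_and_or] at hk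
  rcases hk with hk | hk
  · simp [qE, show (N : ℤ) + k < 0 by omega]
  · simp [qE, show (N : ℤ) < k by omega]


lemma coef_rec {q : ℝ} (h0 : 0 < q) (h1 : q < 1)
    (N : ℕ) (k : ℤ) :
    (1 - (q ^ 2) ^ (2 * N + 1)) * (1 - (q ^ 2) ^ (2 * N + 2)) *
      (qE (q ^ 2) ((N + 1 : ℕ) + k) * qE (q ^ 2) ((N + 1 : ℕ) - k) * q ^ (k ^ 2)) =
    (1 + (q ^ (2 * N + 1)) ^ 2) * (qE (q ^ 2) (N + k) * qE (q ^ 2) (N - k) * q ^ (k ^ 2)) +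
    q ^ (2 * N + 1) * (qE (q ^ 2) (N + (k - 1)) * qE (q ^ 2) (N - (k - 1)) * q ^ ((k - 1) ^ 2)) +
    q ^ (2 * N + 1) * (qE (q ^ 2) (N + (k + 1)) * qE (q ^ 2) (N - (k + 1)) * q ^ ((k + 1) ^ 2)) := by
  have hQ0 : 0 < q ^ 2 := by positivity
  have hQ1 : q ^ 2 < 1 := pow_lt_one₀ h0.le h1 (by norm_num)
  have hq := h0.ne'
  have r1 := qE_rec hQ0 hQ1 (N + 1 + k)
  have r2 := qE_rec hQ0 hQ1 (N + k)
  have r3 := qE_rec hQ0 hQ1 (N + 1 - k)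
  have r4 := qE_rec hQ0 hQ1 (N - k)
  rw [show (N : ℤ) + 1 + k - 1 = N + k by ring] at r1
  rw [show (N : ℤ) + 1 - k - 1 = N - k by ring] at r3
  push_cast
  rw [show (N : ℤ) + (k - 1) = N + k - 1 by ring, show (N : ℤ) - (k - 1) = N + 1 - k by ring,
    show (N : ℤ) + (k + 1) = N + 1 + k by ring, show (N : ℤ) - (k + 1) = N - k - 1 by ring,
    r2, r4, r1, r3]
  generalize qE (q ^ 2) (N + 1 + k) = a
  generalize qE (q ^ 2) (N + 1 - k) = b
  have z1 : (q ^ 2) ^ ((N : ℤ) + 1 + k) = (q ^ N * q * q ^ k) ^ 2 := by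
    rw [zpow_add₀ hQ0.ne', zpow_add₀ hQ0.ne', zpow_natCast, zpow_one, ← zpow_natCast q 2,
      zpow_comm]
    simp only [zpow_natCast]; ring
  have z2 : (q ^ 2) ^ ((N : ℤ) + 1 - k) = (q ^ N * q / q ^ k) ^ 2 := by
    rw [zpow_sub₀ hQ0.ne', zpow_add₀ hQ0.ne', zpow_natCast, zpow_one, ← zpow_natCast q 2,
      zpow_comm]
    simp only [zpow_natCast]; ring
  have z3 : (q ^ 2) ^ ((N : ℤ) + k) = (q ^ N * q ^ k) ^ 2 := by
    rw [zpow_add₀ hQ0.ne', zpow_natCast, ← zpow_natCast q 2,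
      zpow_comm]
    simp only [zpow_natCast]; ring
  have z4 : (q ^ 2) ^ ((N : ℤ) - k) = (q ^ N / q ^ k) ^ 2 := by
    rw [zpow_sub₀ hQ0.ne', zpow_natCast, ← zpow_natCast q 2,
      zpow_comm]
    simp only [zpow_natCast]; ring
  have z5 : q ^ ((k - 1) ^ 2) = q ^ (k ^ 2) * q / (q ^ k) ^ 2 := by
    rw [show (k - 1) ^ 2 = k ^ 2 + 1 - k * 2 by ring, zpow_sub₀ hq, zpow_add₀ hq, zpow_mul,
      zpow_one]
    rfl
  have z6 : q ^ ((k + 1) ^ 2) = q ^ (k ^ 2) * q * (q ^ k) ^ 2 := by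
    rw [show (k + 1) ^ 2 = k ^ 2 + 1 + k * 2 by ring, zpow_add₀ hq, zpow_add₀ hq, zpow_mul,
      zpow_one]
    rfl
  rw [z1, z2, z3, z4, z5, z6]
  have hy : q ^ k ≠ 0 := zpow_ne_zero _ hq
  generalize q ^ k = y at *
  generalize q ^ (k ^ 2) = X
  have p1 : q ^ (2 * N + 1) = (q ^ N) ^ 2 * q := by ring
  have p2 : (q ^ 2) ^ (2 * N + 1) = ((q ^ N) ^ 2 * q) ^ 2 := by ring
  have p3 : (q ^ 2) ^ (2 * N + 2) = ((q ^ N) ^ 2 * q ^ 2) ^ 2 := by ring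
  rw [p1, p2, p3]
  generalize q ^ N = T
  field_simp
  ring

lemma finite_jtp {q : ℝ} (h0 : 0 < q) (h1 : q < 1)
    {c : ℝ} {w : ℤ → ℝ} (hw0 : w 0 = 1)
    (hw : ∀ k, w (k + 1) + w (k - 1) = c * w k) (N : ℕ) :
    ∑' k : ℤ, qE (q ^ 2) (N + k) * qE (q ^ 2) (N - k) * q ^ (k ^ 2) * w k =
      (∏ j ∈ Finset.range N, (1 + c * q ^ (2 * j + 1) + (q ^ (2 * j + 1)) ^ 2)) /
        qD (q ^ 2) (2 * N) := by
  have hQ0 : 0 < q ^ 2 := by positivity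
  have hQ1 : q ^ 2 < 1 := pow_lt_one₀ h0.le h1 (by norm_num)
  induction N with
  | zero =>
    rw [tsum_eq_single 0]
    · simp [qE, qD, hw0]
    · intro k hk
      rcases lt_or_gt_of_ne hk with h | h
      · simp [qE, h]
      · simp [qE, h]
  | succ N ih =>
    have s := fin_summable q N
    have hD : qD (q ^ 2) (2 * (N + 1)) = qD (q ^ 2) (2 * N) *
        ((1 - (q ^ 2) ^ (2 * N + 1)) * (1 - (q ^ 2) ^ (2 * N + 2))) := by
      rw [show 2 * (N + 1) = 2 * N + 1 + 1 by ring, qD, Finset.prod_range_succ,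
        Finset.prod_range_succ, ← qD]
      ring
    have f1 := qfac_pos hQ0 hQ1 (2 * N)
    have f2 := qfac_pos hQ0 hQ1 (2 * N + 1)
    have f3 := qD_pos hQ0 hQ1 (2 * N)
    rw [Finset.prod_range_succ, hD]
    set b : ℤ → ℝ := fun k => qE (q ^ 2) (N + k) * qE (q ^ 2) (N - k) * q ^ (k ^ 2) with hb
    set t := q ^ (2 * N + 1) with ht
    have hbw : ∀ k, qE (q ^ 2) (N + k) * qE (q ^ 2) (N - k) * q ^ (k ^ 2) * w k = b k * w k :=
      fun k => rfl
    have sb : ∀ w : ℤ → ℝ, Summable (fun k => b k * w k) := s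
    have sm : Summable (fun k => b (k - 1) * w k) := by
      have := (Equiv.subRight (1 : ℤ)).summable_iff.mpr (sb (fun k => w (k + 1)))
      refine this.congr fun k => ?_
      simp
    have sp : Summable (fun k => b (k + 1) * w k) := by
      have := (Equiv.addRight (1 : ℤ)).summable_iff.mpr (sb (fun k => w (k - 1)))
      refine this.congr fun k => ?_
      simp
    have tm : ∑' k, b (k - 1) * w k = ∑' k, b k * w (k + 1) := by
      rw [← (Equiv.subRight (1 : ℤ)).tsum_eq (fun k => b k * w (k + 1))]
      refine tsum_congr fun k => ?_
      simp
    have tp : ∑' k, b (k + 1) * w k = ∑' k, b k * w (k - 1) := by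
      rw [← (Equiv.addRight (1 : ℤ)).tsum_eq (fun k => b k * w (k - 1))]
      refine tsum_congr fun k => ?_
      simp
    have tc : ∑' k, b k * w (k + 1) + ∑' k, b k * w (k - 1) = c * ∑' k, b k * w k := by
      rw [← (sb fun k => w (k + 1)).tsum_add (sb fun k => w (k - 1)), ← tsum_mul_left]
      refine tsum_congr fun k => ?_
      rw [← mul_add, hw]; ring
    have key : (1 - (q ^ 2) ^ (2 * N + 1)) * (1 - (q ^ 2) ^ (2 * N + 2)) *
      ∑' k : ℤ, qE (q ^ 2) ((N + 1 : ℕ) + k) * qE (q ^ 2) ((N + 1 : ℕ) - k) * q ^ (k ^ 2) * w k =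
      (1 + c * t + t ^ 2) * ∑' k, b k * w k := by
      rw [← tsum_mul_left]
      have : ∀ k : ℤ, (1 - (q ^ 2) ^ (2 * N + 1)) * (1 - (q ^ 2) ^ (2 * N + 2)) *
        (qE (q ^ 2) ((N + 1 : ℕ) + k) * qE (q ^ 2) ((N + 1 : ℕ) - k) * q ^ (k ^ 2) * w k) =
        ((1 + t ^ 2) * (b k * w k) + t * (b (k - 1) * w k)) + t * (b (k + 1) * w k) := by
        intro k
        have := coef_rec h0 h1 N k
        simp only [hb]
        linear_combination (w k) * this
      rw [tsum_congr this, Summable.tsum_add (((sb w).mul_left _).add (sm.mul_left _))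
        (sp.mul_left _), Summable.tsum_add ((sb w).mul_left _) (sm.mul_left _), tsum_mul_left,
        tsum_mul_left, tsum_mul_left, tm, tp]
      linear_combination t * tc
    simp only [hbw] at ih
    rw [ih] at key
    rw [eq_div_iff (by positivity)]
    have hne := f3.ne'
    field_simp at key
    linear_combination key

lemma jtp_lim {q : ℝ} (h0 : 0 < q) (h1 : q < 1)
    {c : ℝ} {w : ℤ → ℝ} (hw0 : w 0 = 1) (hb : ∀ k, |w k| ≤ 1)
    (hw : ∀ k, w (k + 1) + w (k - 1) = c * w k) {L : ℝ} (hL : ∀ n, qE (q ^ 2) n ≤ L)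
    (hLt : Tendsto (qE (q ^ 2)) atTop (nhds L))
    (hs : Summable (fun k : ℤ => q ^ (k ^ 2))) :
    Tendsto (fun N : ℕ => (∏ j ∈ Finset.range N, (1 + c * q ^ (2 * j + 1) + (q ^ (2 * j + 1)) ^ 2)) /
        qD (q ^ 2) (2 * N)) atTop (nhds (L * L * ∑' k : ℤ, q ^ (k ^ 2) * w k)) := by
  have hQ0 : 0 < q ^ 2 := by positivity
  have hQ1 : q ^ 2 < 1 := pow_lt_one₀ h0.le h1 (by norm_num)
  have : Tendsto (fun N : ℕ => ∑' k : ℤ, qE (q ^ 2) (N + k) * qE (q ^ 2) (N - k) * q ^ (k ^ 2) * w k)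
      atTop (nhds (∑' k : ℤ, L * L * q ^ (k ^ 2) * w k)) := by
    apply tendsto_tsum_of_dominated_convergence (hs.mul_left (L * L))
    · intro k
      have a1 : Tendsto (fun N : ℕ => (N : ℤ) + k) atTop atTop :=
        tendsto_atTop_add_const_right _ _ tendsto_natCast_atTop_atTop
      have a2 : Tendsto (fun N : ℕ => (N : ℤ) - k) atTop atTop := by
        simp only [sub_eq_add_neg]
        exact tendsto_atTop_add_const_right _ _ tendsto_natCast_atTop_atTop
      exact (((hLt.comp a1).mul (hLt.comp a2)).mul_const _).mul_const _
    · refine Eventually.of_forall fun N k => ?_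
      have e1 := qE_nonneg hQ0 hQ1 (N + k)
      have e2 := qE_nonneg hQ0 hQ1 (N - k)
      have z := zpow_pos h0 (k ^ 2)
      have hL0 := e1.trans (hL _)
      rw [norm_mul, Real.norm_eq_abs, Real.norm_eq_abs, abs_of_nonneg (by positivity)]
      calc _ ≤ L * L * q ^ (k ^ 2) * 1 := by
            gcongr
            · exact hL _
            · exact hL _
            · exact hb k
        _ = _ := mul_one _
  simp only [finite_jtp h0 h1 hw0 hw] at this
  convert! this using 2
  rw [← tsum_mul_left]
  refine tsum_congr fun k => by ring

lemma jtp_ratio {q : ℝ} (h0 : 0 < q) (h1 : q < 1)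
    {c : ℝ} (hc : 0 ≤ c) {w v : ℤ → ℝ} (hw0 : w 0 = 1) (hb : ∀ k, |w k| ≤ 1)
    (hw : ∀ k, w (k + 1) + w (k - 1) = c * w k)
    (hv0 : v 0 = 1) (hvb : ∀ k, |v k| ≤ 1)
    (hv : ∀ k, v (k + 1) + v (k - 1) = -c * v k)
    (hs : Summable (fun k : ℤ => q ^ (k ^ 2))) :
    0 < ∑' k : ℤ, q ^ (k ^ 2) * w k ∧
    Tendsto (fun N : ℕ => ∏ j ∈ Finset.range N,
      ((1 + -c * q ^ (2 * j + 1) + (q ^ (2 * j + 1)) ^ 2) /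
        (1 + c * q ^ (2 * j + 1) + (q ^ (2 * j + 1)) ^ 2))) atTop
      (nhds ((∑' k : ℤ, q ^ (k ^ 2) * v k) / ∑' k : ℤ, q ^ (k ^ 2) * w k)) := by
  have hQ0 : 0 < q ^ 2 := by positivity
  have hQ1 : q ^ 2 < 1 := pow_lt_one₀ h0.le h1 (by norm_num)
  obtain ⟨L, hL0, hL, hLt⟩ := qE_lim hQ0 hQ1
  have A := jtp_lim h0 h1 hw0 hb hw hL hLt hs
  have B := jtp_lim h0 h1 hv0 hvb hv hL hLt hs
  have hge : 1 ≤ L * L * ∑' k : ℤ, q ^ (k ^ 2) * w k := by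
    refine ge_of_tendsto' A fun N => ?_
    rw [le_div_iff₀ (qD_pos hQ0 hQ1 _), one_mul]
    refine (qD_le_one hQ0 hQ1 _).trans ?_
    have hle := Finset.prod_le_prod (s := Finset.range N) (f := fun _ => (1 : ℝ))
      (g := fun j => 1 + c * q ^ (2 * j + 1) + (q ^ (2 * j + 1)) ^ 2)
      (fun _ _ => zero_le_one) (fun j _ => by
        have : 0 < q ^ (2 * j + 1) := by positivity
        nlinarith [mul_nonneg hc this.le])
    simpa using hle
  have hpos : 0 < ∑' k : ℤ, q ^ (k ^ 2) * w k := by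
    have : 0 < L * L := by positivity
    by_contra hcon
    nlinarith
  refine ⟨hpos, ?_⟩
  have C := B.div A (by linarith)
  rw [mul_div_mul_left _ _ (by positivity)] at C
  refine C.congr fun N => ?_
  rw [Finset.prod_div_distrib, Pi.div_apply, div_div_div_cancel_right₀ (qD_pos hQ0 hQ1 _).ne']


lemma summable_double {q : ℝ} (h0 : 0 < q) (h1 : q < 1) :
    Summable (fun z : ℤ × ℕ => (-1 : ℝ) ^ z.1 * (q ^ (2 * z.2 + 1)) ^ (4 * z.1 + 1).natAbs /
      ((4 * z.1 + 1).natAbs : ℝ)) := by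
  have hs := (summable_pow_natAbs h0 h1).mul_of_nonneg (summable_geometric_of_lt_one h0.le h1)
    (fun n => by positivity) (fun n => by positivity)
  refine hs.of_norm_bounded ?_
  rintro ⟨n, j⟩
  have hA : 1 ≤ (4 * n + 1).natAbs := by omega
  have hA' : n.natAbs + 1 ≤ (4 * n + 1).natAbs := by omega
  have hAr : (1 : ℝ) ≤ ((4 * n + 1).natAbs : ℝ) := by exact_mod_cast hA
  simp only
  rw [norm_div, norm_mul, Real.norm_eq_abs, Real.norm_eq_abs, Real.norm_eq_abs, abs_zpow, abs_neg,
    abs_one, one_zpow, one_mul, abs_of_nonneg (by positivity), abs_of_nonneg (by positivity)]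
  calc _ ≤ (q ^ (2 * j + 1)) ^ (4 * n + 1).natAbs := div_le_self (by positivity) hAr
    _ ≤ q ^ (n.natAbs + j) := by
      rw [← pow_mul]
      apply pow_le_pow_of_le_one h0.le h1.le
      calc n.natAbs + j ≤ (2 * j + 1) * (n.natAbs + 1) := by nlinarith [Nat.zero_le (j * n.natAbs)]
        _ ≤ _ := Nat.mul_le_mul_left _ hA'
    _ = _ := pow_add _ _ _

lemma tsum_geo {x q : ℝ} (hx : 0 < x) (hq : q = Real.exp (-Real.pi / x)) (n : ℤ) :
    ∑' m : ℤ, (-1 : ℝ) ^ (m + n) / ((x * m) ^ 2 + (4 * (n : ℝ) + 1) ^ 2) =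
    (2 * Real.pi / x) * ∑' j : ℕ, (-1 : ℝ) ^ n * (q ^ (2 * j + 1)) ^ (4 * n + 1).natAbs /
      ((4 * n + 1).natAbs : ℝ) := by
  have ha : (4 * (n : ℝ) + 1) ≠ 0 := by
    have : (4 * n + 1 : ℤ) ≠ 0 := by omega
    exact_mod_cast this
  have h0 : 0 < q := by rw [hq]; positivity
  have h1 : q < 1 := by
    rw [hq, Real.exp_lt_one_iff]
    have := Real.pi_pos
    rw [neg_div]
    have : 0 < Real.pi / x := by positivity
    linarith
  set A := (4 * n + 1).natAbs with hA
  have hA1 : A ≠ 0 := by omega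
  have hAr : (A : ℝ) = |4 * (n : ℝ) + 1| := by
    rw [hA, Nat.cast_natAbs]; push_cast; rfl
  have hA0 : (0 : ℝ) < A := by rw [hAr]; positivity
  have hqA : q ^ A < 1 := pow_lt_one₀ h0.le h1 hA1
  have hqA0 : 0 < q ^ A := by positivity
  have hr : (q ^ A) ^ 2 < 1 := pow_lt_one₀ hqA0.le hqA (by norm_num)
  have R : ∑' j : ℕ, (-1 : ℝ) ^ n * (q ^ (2 * j + 1)) ^ A / (A : ℝ) =
      (-1) ^ n * q ^ A / A * (1 - (q ^ A) ^ 2)⁻¹ := by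
    rw [← tsum_geometric_of_lt_one (by positivity) hr, ← tsum_mul_left]
    refine tsum_congr fun j => ?_
    rw [show (q ^ (2 * j + 1)) ^ A = q ^ A * ((q ^ A) ^ 2) ^ j by ring]
    ring
  have Lh : ∑' m : ℤ, (-1 : ℝ) ^ (m + n) / ((x * m) ^ 2 + (4 * (n : ℝ) + 1) ^ 2) =
      (-1) ^ n / x ^ 2 * (∑' m : ℤ, (-1 : ℝ) ^ m / ((m : ℝ) ^ 2 + ((4 * (n : ℝ) + 1) / x) ^ 2)) := by
    rw [← tsum_mul_left]
    refine tsum_congr fun m => ?_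
    rw [zpow_add₀ (by norm_num), div_mul_div_comm]
    congr 1
    · ring
    · field_simp
  have ev : (4 * (n : ℝ) + 1) / x * Real.sinh (Real.pi * ((4 * (n : ℝ) + 1) / x)) =
      A / x * Real.sinh (Real.pi * (A / x)) := by
    rw [hAr]
    rcases abs_choice (4 * (n : ℝ) + 1) with h | h
    · rw [h]
    · rw [h, neg_div, mul_neg, Real.sinh_neg]; ring
  have sh : Real.sinh (Real.pi * (A / x)) = ((q ^ A)⁻¹ - q ^ A) / 2 := by
    rw [Real.sinh_eq, hq, ← Real.exp_nat_mul, ← Real.exp_neg]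
    congr 3 <;> ring
  rw [R, Lh, tsum_csch (div_ne_zero ha hx.ne'), ev, sh]
  have h3 : 1 - (q ^ A) ^ 2 ≠ 0 := by linarith
  have h4 : (q ^ A)⁻¹ - q ^ A = (1 - (q ^ A) ^ 2) / q ^ A := by field_simp
  rw [h4]
  field_simp

/-- For real `x > 0`, with `q = e^{-π/x}` and `α = 1 - φ⁴(-q⁸)/φ⁴(q⁸)`,
`F_{(4,1)}(x) = -(π/(√2 x)) log((1 - α^{1/8})/(1 + α^{1/8}))`,
with `α^{1/8}` the positive real eighth root. -/
theorem F41_evaluation (x : ℝ) (hx : 0 < x) (q α : ℝ)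
    (hq : q = Real.exp (-Real.pi / x))
    (hα : α = 1 - (phi (-(q ^ 8))) ^ 4 / (phi (q ^ 8)) ^ 4) :
    Tendsto (fun N : ℕ => ∑ n ∈ Finset.Ioo (-(N : ℤ)) (N : ℤ),
        ∑' m : ℤ, (-1 : ℝ) ^ (m + n) / ((x * m) ^ 2 + (4 * (n : ℝ) + 1) ^ 2))
      atTop
      (nhds (-(Real.pi / (Real.sqrt 2 * x)) *
        Real.log ((1 - α ^ ((1 : ℝ) / 8)) / (1 + α ^ ((1 : ℝ) / 8))))) := by
  have h0 : 0 < q := by rw [hq]; positivity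
  have h1 : q < 1 := by
    rw [hq, Real.exp_lt_one_iff]
    have := Real.pi_pos
    rw [neg_div]
    have : 0 < Real.pi / x := by positivity
    linarith
  have s0 : 0 < Real.sqrt 2 := by positivity
  have s2 : Real.sqrt 2 ^ 2 = 2 := Real.sq_sqrt (by norm_num)
  have sd := summable_double h0 h1
  obtain ⟨T, hT⟩ := sd
  have F1 : HasSum (fun n : ℤ => ∑' m : ℤ, (-1 : ℝ) ^ (m + n) /
      ((x * m) ^ 2 + (4 * (n : ℝ) + 1) ^ 2)) ((2 * Real.pi / x) * T) := by
    have := (hT.prod_fiberwise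
      (fun n => (hT.summable.prod_factor n).hasSum)).mul_left (2 * Real.pi / x)
    refine this.congr_fun ?_ |> fun h => h
    intro n
    exact tsum_geo hx hq n
  have F2 : HasSum (fun j : ℕ => -(1 / (2 * Real.sqrt 2)) *
      Real.log ((1 + -Real.sqrt 2 * q ^ (2 * j + 1) + (q ^ (2 * j + 1)) ^ 2) /
        (1 + Real.sqrt 2 * q ^ (2 * j + 1) + (q ^ (2 * j + 1)) ^ 2))) T := by
    have hT' := (Equiv.prodComm ℕ ℤ).hasSum_iff.mpr hT
    refine hT'.prod_fiberwise fun j => ?_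
    exact hasSum_chi_log (t := q ^ (2 * j + 1)) (by positivity)
      (pow_lt_one₀ h0.le h1 (by omega))
  set ρ : ℕ → ℝ := fun j => (1 + -Real.sqrt 2 * q ^ (2 * j + 1) + (q ^ (2 * j + 1)) ^ 2) /
        (1 + Real.sqrt 2 * q ^ (2 * j + 1) + (q ^ (2 * j + 1)) ^ 2) with hρ
  have num_pos : ∀ t : ℝ, 0 < 1 + -Real.sqrt 2 * t + t ^ 2 := by
    intro t; nlinarith [sq_nonneg (Real.sqrt 2 * t - 1)]
  have ρpos : ∀ j, 0 < ρ j := fun j => div_pos (num_pos _) (by positivity)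
  have ρle : ∀ j, ρ j ≤ 1 := by
    intro j
    rw [hρ]
    simp only
    rw [div_le_one (by positivity)]
    have : 0 < Real.sqrt 2 * q ^ (2 * j + 1) := by positivity
    linarith
  have F3 : HasSum (fun j => Real.log (ρ j)) (-(2 * Real.sqrt 2) * T) := by
    have := F2.mul_left (-(2 * Real.sqrt 2))
    refine this.congr_fun ?_ |> fun h => h
    intro j
    show Real.log (ρ j) = -(2 * Real.sqrt 2) * (-(1 / (2 * Real.sqrt 2)) * Real.log (ρ j))
    generalize Real.log (ρ j) = l
    field_simp
  set S := -(2 * Real.sqrt 2) * T with hS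
  have S0 : S ≤ 0 := hasSum_le (fun j => Real.log_nonpos (ρpos j).le (ρle j)) F3 hasSum_zero
  have F4 : Tendsto (fun N : ℕ => ∏ j ∈ Finset.range N, ρ j) atTop (nhds (Real.exp S)) := by
    refine ((Real.continuous_exp.tendsto S).comp F3.tendsto_sum_nat).congr fun N => ?_
    simp only [Function.comp]
    rw [Real.exp_sum]
    exact Finset.prod_congr rfl fun j _ => Real.exp_log (ρpos j)
  have rec_cos : ∀ (θ : ℝ) (k : ℤ), Real.cos (((k + 1 : ℤ) : ℝ) * θ) +
      Real.cos (((k - 1 : ℤ) : ℝ) * θ) = (2 * Real.cos θ) * Real.cos ((k : ℝ) * θ) := by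
    intro θ k
    push_cast
    rw [add_mul, sub_mul, one_mul, Real.cos_add, Real.cos_sub]; ring
  obtain ⟨pos, F5⟩ := jtp_ratio h0 h1 (c := Real.sqrt 2) s0.le
    (w := fun k => Real.cos ((k : ℝ) * (Real.pi / 4)))
    (v := fun k => Real.cos ((k : ℝ) * (3 * Real.pi / 4)))
    (by simp) (fun k => Real.abs_cos_le_one _)
    (fun k => by rw [rec_cos, Real.cos_pi_div_four]; ring)
    (by simp) (fun k => Real.abs_cos_le_one _)
    (fun k => by rw [rec_cos, cos_three]; ring)
    (summable_qd1 h0 h1 _ qb1)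
  have F6 := tendsto_nhds_unique F4 F5
  obtain ⟨tp, tm⟩ := theta_split h0 h1
  rw [tp] at pos
  rw [tp, tm] at F6
  have p0 : 0 < q ^ 8 := by positivity
  have p1 : q ^ 8 < 1 := pow_lt_one₀ h0.le h1 (by norm_num)
  have IM := id_main p0 p1
  rw [← hα] at IM
  set E := ∑' n : ℤ, (-1 : ℝ) ^ n * (q ^ 8) ^ (2 * n ^ 2)
  set G := ∑' n : ℤ, (-1 : ℝ) ^ n * (q ^ 8) ^ (2 * n ^ 2 + n)
  have es : Real.exp S ≤ 1 := Real.exp_le_one_iff.mpr S0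
  have es0 := Real.exp_pos S
  rw [eq_div_iff pos.ne'] at F6
  have hG : 0 ≤ Real.sqrt 2 * q * G := by nlinarith
  have hEpos : 0 < E := by nlinarith [mul_pos es0 pos]
  have hr0 : 0 ≤ Real.sqrt 2 * q * G / E := div_nonneg hG hEpos.le
  have h8 : α = (Real.sqrt 2 * q * G / E) ^ 8 := by
    rw [IM hEpos.ne', div_pow, div_pow, mul_pow, mul_pow,
      show Real.sqrt 2 ^ 8 = (Real.sqrt 2 ^ 2) ^ 4 by ring, s2]
    ring
  have hroot : α ^ ((1 : ℝ) / 8) = Real.sqrt 2 * q * G / E := by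
    rw [h8, ← Real.rpow_natCast, ← Real.rpow_mul hr0]
    norm_num
  have hval : (1 - α ^ ((1 : ℝ) / 8)) / (1 + α ^ ((1 : ℝ) / 8)) = Real.exp S := by
    rw [hroot]
    have hE := hEpos.ne'
    have : 1 + Real.sqrt 2 * q * G / E ≠ 0 := by positivity
    rw [div_eq_iff this]
    field_simp
    linear_combination -F6
  rw [hval, Real.log_exp]
  have hfin : -(Real.pi / (Real.sqrt 2 * x)) * S = 2 * Real.pi / x * T := by
    rw [hS]; field_simp
  rw [hfin]
  exact F1.comp (Finset.tendsto_Ioo_neg_atTop_atTop.comp tendsto_natCast_atTop_atTop)
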